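/- Let N ≥ 1, let η ∈ [-1,1], and set p = 1 - (2/π)·arccos(η). Then for all sets A, B ⊆ {-1,1}^N, the probability under Ξ_η that (sgn(x), sgn(y)) ∈ A × B equals ξ_p(A × B), where sgn is applied coordinatewise (with any fixed convention at 0, which occurs with probability zero). -/

import Mathlib

open MeasureTheory ProbabilityTheory

/-- The standard Gaussian measure `γ^N` on `ℝ^N`. -/
noncomputable def stdGaussianPi (N : ℕ) : Measure (Fin N → ℝ) :=
  Measure.pi fun _ => gaussianReal 0 1

/-- The measure `Ξ_η` on `ℝ^N × ℝ^N`: `x, z` independent standard Gaussians and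
`y = η x + √(1-η²) z`. -/
noncomputable def Xi (N : ℕ) (η : ℝ) : Measure ((Fin N → ℝ) × (Fin N → ℝ)) :=
  Measure.map (fun xz => (xz.1, η • xz.1 + Real.sqrt (1 - η ^ 2) • xz.2))
    ((stdGaussianPi N).prod (stdGaussianPi N))

/-- Number of coordinates on which `x` and `y` agree. -/
def agree {N : ℕ} (x y : Fin N → Bool) : ℕ :=
  (Finset.univ.filter fun i => x i = y i).card

/-- The probability that `ξ_p` assigns to the pair `(x, y)`. -/
noncomputable def xiMass (N : ℕ) (p : ℝ) (x y : Fin N → Bool) : ℝ :=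
  (1 / 2) ^ N * ((1 + p) / 2) ^ agree x y * ((1 - p) / 2) ^ (N - agree x y)

/-- The probability that `(x,y) ∈ A × B` under `ξ_p`. -/
noncomputable def xiProb (N : ℕ) (p : ℝ) (A B : Finset (Fin N → Bool)) : ℝ :=
  ∑ x ∈ A, ∑ y ∈ B, xiMass N p x y

/-- Coordinatewise sign of a real vector, as a `±1` string encoded by Booleans
(with the convention `sgn 0 = +1`, an event of probability zero). -/
noncomputable def sgnVec {N : ℕ} (x : Fin N → ℝ) : Fin N → Bool := fun i => decide (0 ≤ x i)

section PlanarGaussian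

open Real Set

/-- The density of the planar standard Gaussian measure depends only on the radius. -/
lemma gaussianPDF_mul_polar (r φ : ℝ) :
    gaussianPDF 0 1 (r * cos φ) * gaussianPDF 0 1 (r * sin φ)
      = gaussianPDF 0 1 r * gaussianPDF 0 1 0 := by
  rw [gaussianPDF_def]
  simp only [← ENNReal.ofReal_mul (gaussianPDFReal_nonneg 0 1 _)]
  simp only [gaussianPDFReal_def]
  congr 1
  rw [mul_mul_mul_comm, ← Real.exp_add, mul_mul_mul_comm _ _ _ (rexp (-(0 - 0) ^ 2 / _)),
    ← Real.exp_add]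
  congr 2
  have := Real.sin_sq_add_cos_sq φ
  simp only [NNReal.coe_one, sub_zero]
  linear_combination (-r ^ 2 / 2) * this

/-- A planar set which in polar coordinates is described by its angular part `T` has standard
Gaussian measure proportional to the length of `T`. -/
lemma gaussian_prod_apply_of_polar {S : Set (ℝ × ℝ)} {T : Set ℝ} (hS : MeasurableSet S)
    (hT : MeasurableSet T)
    (h : ∀ᵐ φ : ℝ, φ ∈ Ioo (-π) π → ∀ r : ℝ, 0 < r → ((r * cos φ, r * sin φ) ∈ S ↔ φ ∈ T)) :
    ((gaussianReal 0 1).prod (gaussianReal 0 1)) S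
      = (∫⁻ r in Ioi (0 : ℝ), ENNReal.ofReal r * (gaussianPDF 0 1 r * gaussianPDF 0 1 0))
        * volume (T ∩ Ioo (-π) π) := by
  have hm := measurable_gaussianPDF 0 1
  rw [gaussianReal_of_var_ne_zero _ one_ne_zero, prod_withDensity hm hm, withDensity_apply _ hS,
    ← lintegral_indicator hS, ← Measure.volume_eq_prod, ← lintegral_comp_polarCoord_symm,
    polarCoord_target, Measure.volume_eq_prod, ← Measure.prod_restrict,
    ← Measure.restrict_apply hT, ← lintegral_indicator_one hT, ← lintegral_prod_mul]
  · refine lintegral_congr_ae ?_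
    have h1 : ∀ᵐ p ∂((volume.restrict (Ioi (0 : ℝ))).prod (volume.restrict (Ioo (-π) π))),
        0 < p.1 :=
      Measure.quasiMeasurePreserving_fst.ae (ae_restrict_mem measurableSet_Ioi)
    have h2 : ∀ᵐ p ∂((volume.restrict (Ioi (0 : ℝ))).prod (volume.restrict (Ioo (-π) π))),
        ∀ r : ℝ, 0 < r → ((r * cos p.2, r * sin p.2) ∈ S ↔ p.2 ∈ T) :=
      Measure.quasiMeasurePreserving_snd.ae ((ae_restrict_iff' measurableSet_Ioo).2 h)
    filter_upwards [h1, h2] with p hp hp'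
    by_cases hpT : p.2 ∈ T
    · simp [polarCoord_symm_apply, indicator, hp' p.1 hp, hpT, gaussianPDF_mul_polar]
    · simp [polarCoord_symm_apply, indicator, hp' p.1 hp, hpT]
  · fun_prop
  · exact (measurable_one.indicator hT).aemeasurable

/-- The standard Gaussian measure of a planar sector is proportional to its angle. -/
lemma gaussian_prod_real_sector {S : Set (ℝ × ℝ)} {a b : ℝ} (hS : MeasurableSet S)
    (ha : -π ≤ a) (hab : a ≤ b) (hb : b ≤ π)
    (h : ∀ᵐ φ : ℝ, φ ∈ Ioo (-π) π →
      ∀ r : ℝ, 0 < r → ((r * cos φ, r * sin φ) ∈ S ↔ φ ∈ Icc a b)) :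
    ((gaussianReal 0 1).prod (gaussianReal 0 1)).real S = (b - a) / (2 * π) := by
  set C := ∫⁻ r in Ioi (0 : ℝ), ENNReal.ofReal r * (gaussianPDF 0 1 r * gaussianPDF 0 1 0) with hC
  have huniv : 1 = C.toReal * (2 * π) := by
    have := gaussian_prod_apply_of_polar MeasurableSet.univ MeasurableSet.univ
      (by simp : ∀ᵐ φ : ℝ, φ ∈ Ioo (-π) π →
        ∀ r : ℝ, 0 < r → ((r * cos φ, r * sin φ) ∈ univ ↔ φ ∈ univ))
    rw [measure_univ, univ_inter, Real.volume_Ioo, ← hC] at this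
    have := congrArg ENNReal.toReal this
    rw [ENNReal.toReal_mul, ENNReal.toReal_ofReal (by linarith [pi_pos])] at this
    simpa [two_mul] using this
  have hvol : volume (Icc a b ∩ Ioo (-π) π) = ENNReal.ofReal (b - a) := by
    refine le_antisymm ?_ ?_
    · rw [← Real.volume_Icc]
      exact measure_mono inter_subset_left
    · rw [← Real.volume_Ioo]
      exact measure_mono fun x hx =>
        ⟨Ioo_subset_Icc_self hx, ha.trans_lt hx.1, hx.2.trans_le hb⟩
  rw [Measure.real, gaussian_prod_apply_of_polar hS measurableSet_Icc h, hvol, ENNReal.toReal_mul,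
    ENNReal.toReal_ofReal (by linarith), ← hC, eq_div_iff (by positivity)]
  linear_combination -(b - a) * huniv

lemma ae_cos_sub_ne_zero (θ : ℝ) : ∀ᵐ φ : ℝ, cos (φ - θ) ≠ 0 := by
  filter_upwards [(countable_range fun k : ℤ => θ + (2 * k + 1) * π / 2).ae_notMem volume]
    with φ hφ h0
  obtain ⟨k, hk⟩ := Real.cos_eq_zero_iff.1 h0
  exact hφ ⟨k, by simp only [← hk]; ring⟩

lemma abs_le_pi_div_two_of_cos_pos {φ : ℝ} (hφ : φ ∈ Ioo (-π) π) (h : 0 < cos φ) :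
    |φ| ≤ π / 2 := by
  by_contra! hlt
  have := Real.cos_neg_of_pi_div_two_lt_of_lt hlt
    (by linarith [pi_pos, abs_lt.2 hφ] : |φ| < π + π / 2)
  rw [Real.cos_abs] at this
  linarith

lemma cos_pos_and_cos_sub_pos_iff {θ φ : ℝ} (h0 : 0 ≤ θ) (hπ : θ ≤ π) (hφ : φ ∈ Ioo (-π) π)
    (h1 : cos φ ≠ 0) (h2 : cos (φ - θ) ≠ 0) :
    0 < cos φ ∧ 0 < cos (φ - θ) ↔ φ ∈ Icc (θ - π / 2) (π / 2) := by
  constructor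
  · rintro ⟨hc, hs⟩
    have hab := abs_le.1 (abs_le_pi_div_two_of_cos_pos hφ hc)
    refine ⟨?_, hab.2⟩
    by_contra! hlt
    rw [← Real.cos_neg, neg_sub] at hs
    rcases eq_or_lt_of_le hab.1 with heq | hlt'
    · rw [← heq, Real.cos_neg, Real.cos_pi_div_two] at hc
      exact hc.false
    · have := Real.cos_neg_of_pi_div_two_lt_of_lt (x := θ - φ) (by linarith) (by linarith)
      linarith
  · rintro ⟨ha, hb⟩
    exact ⟨(Real.cos_nonneg_of_mem_Icc ⟨by linarith, hb⟩).lt_of_ne' h1,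
      (Real.cos_nonneg_of_mem_Icc ⟨by linarith, by linarith⟩).lt_of_ne' h2⟩

lemma cos_pos_and_cos_sub_neg_iff {θ φ : ℝ} (h0 : 0 ≤ θ) (hπ : θ ≤ π) (hφ : φ ∈ Ioo (-π) π)
    (h1 : cos φ ≠ 0) (h2 : cos (φ - θ) ≠ 0) :
    0 < cos φ ∧ cos (φ - θ) < 0 ↔ φ ∈ Icc (-(π / 2)) (θ - π / 2) := by
  constructor
  · rintro ⟨hc, hs⟩
    have hab := abs_le.1 (abs_le_pi_div_two_of_cos_pos hφ hc)
    refine ⟨hab.1, ?_⟩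
    by_contra! hlt
    exact hs.not_ge (Real.cos_nonneg_of_mem_Icc ⟨by linarith, by linarith⟩)
  · rintro ⟨ha, hb⟩
    refine ⟨(Real.cos_nonneg_of_mem_Icc ⟨ha, by linarith⟩).lt_of_ne' h1, ?_⟩
    rw [← Real.cos_neg, neg_sub] at h2 ⊢
    exact (Real.cos_nonpos_of_pi_div_two_le_of_le (by linarith) (by linarith)).lt_of_ne h2

/-- The planar region where `x` has sign `a` and `cos θ * x + sin θ * z` has sign `b`. -/
def signRegion (θ : ℝ) (a b : Bool) : Set (ℝ × ℝ) :=
  {p | decide (0 ≤ p.1) = a ∧ decide (0 ≤ cos θ * p.1 + sin θ * p.2) = b}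

lemma measurableSet_signRegion (θ : ℝ) (a b : Bool) : MeasurableSet (signRegion θ a b) := by
  have h1 : MeasurableSet {p : ℝ × ℝ | 0 ≤ p.1} := measurableSet_le (by fun_prop) (by fun_prop)
  have h2 : MeasurableSet {p : ℝ × ℝ | 0 ≤ cos θ * p.1 + sin θ * p.2} :=
    measurableSet_le (by fun_prop) (by fun_prop)
  cases a <;> cases b <;> simp only [signRegion, decide_eq_true_eq, decide_eq_false_iff_not]
  exacts [h1.compl.inter h2.compl, h1.compl.inter h2, h1.inter h2.compl, h1.inter h2]

lemma measurePreserving_neg_gaussian_prod :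
    MeasurePreserving (fun p : ℝ × ℝ => (-p.1, -p.2))
      ((gaussianReal 0 1).prod (gaussianReal 0 1))
      ((gaussianReal 0 1).prod (gaussianReal 0 1)) := by
  have h : MeasurePreserving (fun x : ℝ => -x) (gaussianReal 0 1) (gaussianReal 0 1) :=
    ⟨measurable_neg, by rw [gaussianReal_map_neg, neg_zero]⟩
  exact h.prod h

/-- Sheppard's formula: the signs of two standard Gaussians with correlation `cos θ` agree with
probability `1 - θ / π`. -/
lemma gaussian_prod_real_signRegion {θ : ℝ} (h0 : 0 ≤ θ) (hπ : θ ≤ π) (a b : Bool) :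
    ((gaussianReal 0 1).prod (gaussianReal 0 1)).real (signRegion θ a b)
      = (if a = b then π - θ else θ) / (2 * π) := by
  have hpos := pi_pos
  have hcos (r φ : ℝ) : cos θ * (r * cos φ) + sin θ * (r * sin φ) = r * cos (φ - θ) := by
    rw [Real.cos_sub]; ring
  have hneg (r c : ℝ) (hr : 0 < r) : r * c < 0 ↔ c < 0 := by
    rw [← not_le, mul_nonneg_iff_of_pos_left hr, not_le]
  have hnonpos (r c : ℝ) (hr : 0 < r) : r * c ≤ 0 ↔ c ≤ 0 := by
    rw [← not_lt, mul_pos_iff_of_pos_left hr, not_lt]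
  have hae : ∀ᵐ φ : ℝ, cos φ ≠ 0 := by simpa using ae_cos_sub_ne_zero 0
  cases a
  · rw [← measurePreserving_neg_gaussian_prod.measureReal_preimage
      (measurableSet_signRegion _ _ _).nullMeasurableSet]
    have hS := measurePreserving_neg_gaussian_prod.measurable (measurableSet_signRegion θ false b)
    cases b
    · rw [gaussian_prod_real_sector (a := θ - π / 2) (b := π / 2) hS
        (by linarith) (by linarith) (by linarith)]
      · rw [if_pos rfl]; ring
      filter_upwards [hae, ae_cos_sub_ne_zero θ] with φ h1 h2 hφ r hr
      rw [← cos_pos_and_cos_sub_pos_iff h0 hπ hφ h1 h2]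
      simp only [signRegion, mem_preimage, mem_ofPred_eq, decide_eq_false_iff_not, not_le, mul_neg,
        ← neg_add, hcos, neg_neg_iff_pos, mul_pos_iff_of_pos_left hr]
    · rw [gaussian_prod_real_sector (a := -(π / 2)) (b := θ - π / 2) hS
        (by linarith) (by linarith) (by linarith)]
      · rw [if_neg (by decide)]; ring
      filter_upwards [hae, ae_cos_sub_ne_zero θ] with φ h1 h2 hφ r hr
      rw [← cos_pos_and_cos_sub_neg_iff h0 hπ hφ h1 h2]
      simp only [signRegion, mem_preimage, mem_ofPred_eq, decide_eq_false_iff_not, not_le, mul_neg,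
        ← neg_add, hcos, neg_neg_iff_pos, mul_pos_iff_of_pos_left hr, decide_eq_true_eq,
        neg_nonneg, hnonpos r _ hr, h2.le_iff_lt]
  · have hS := measurableSet_signRegion θ true b
    cases b
    · rw [gaussian_prod_real_sector (a := -(π / 2)) (b := θ - π / 2) hS
        (by linarith) (by linarith) (by linarith)]
      · rw [if_neg (by decide)]; ring
      filter_upwards [hae, ae_cos_sub_ne_zero θ] with φ h1 h2 hφ r hr
      rw [← cos_pos_and_cos_sub_neg_iff h0 hπ hφ h1 h2]
      simp only [signRegion, mem_ofPred_eq, decide_eq_false_iff_not, not_le,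
        hcos, decide_eq_true_eq, mul_nonneg_iff_of_pos_left hr, h1.symm.le_iff_lt,
        hneg r _ hr]
    · rw [gaussian_prod_real_sector (a := θ - π / 2) (b := π / 2) hS
        (by linarith) (by linarith) (by linarith)]
      · rw [if_pos rfl]; ring
      filter_upwards [hae, ae_cos_sub_ne_zero θ] with φ h1 h2 hφ r hr
      rw [← cos_pos_and_cos_sub_pos_iff h0 hπ hφ h1 h2]
      simp only [signRegion, mem_ofPred_eq, hcos, decide_eq_true_eq,
        mul_nonneg_iff_of_pos_left hr, h1.symm.le_iff_lt, h2.symm.le_iff_lt]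

end PlanarGaussian

lemma measurable_sgnVec {N : ℕ} : Measurable (sgnVec : (Fin N → ℝ) → Fin N → Bool) := by
  refine measurable_pi_lambda _ fun i => measurable_to_bool ?_
  have : (fun x : Fin N → ℝ => sgnVec x i) ⁻¹' {true} = {x | 0 ≤ x i} := by
    ext x; simp [sgnVec]
  rw [this]
  exact measurableSet_le measurable_const (measurable_pi_apply i)

lemma xiMass_eq_prod (N : ℕ) (p : ℝ) (x y : Fin N → Bool) :
    xiMass N p x y = ∏ i, if x i = y i then (1 + p) / 4 else (1 - p) / 4 := by
  have hcard : (Finset.univ.filter fun i => ¬ x i = y i).card = N - agree x y := by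
    rw [agree, Finset.filter_not, Finset.card_sdiff_of_subset (Finset.filter_subset _ _),
      Finset.card_univ, Fintype.card_fin]
  have hle : agree x y ≤ N := by
    simpa [agree] using Finset.card_filter_le (Finset.univ : Finset (Fin N)) fun i => x i = y i
  rw [Finset.prod_ite, Finset.prod_const, Finset.prod_const, hcard, xiMass]
  change _ = ((1 + p) / 4) ^ agree x y * _
  nth_rewrite 1 [← Nat.add_sub_of_le hle]
  rw [pow_add, mul_assoc, mul_mul_mul_comm, ← mul_pow, ← mul_pow]
  ring_nf

lemma Xi_real_sgnVec_eq (N : ℕ) {η : ℝ} (h0 : -1 ≤ η) (h1 : η ≤ 1) (a b : Fin N → Bool) :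
    (Xi N η).real {xy | sgnVec xy.1 = a ∧ sgnVec xy.2 = b}
      = xiMass N (1 - (2 / Real.pi) * Real.arccos η) a b := by
  have hS : MeasurableSet {xy : (Fin N → ℝ) × (Fin N → ℝ) | sgnVec xy.1 = a ∧ sgnVec xy.2 = b} :=
    ((measurable_sgnVec.comp measurable_fst) (measurableSet_singleton a)).inter
      ((measurable_sgnVec.comp measurable_snd) (measurableSet_singleton b))
  have hmeas : Measurable fun xz : (Fin N → ℝ) × (Fin N → ℝ) =>
      (xz.1, η • xz.1 + Real.sqrt (1 - η ^ 2) • xz.2) := by fun_prop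
  have hpre := (measurePreserving_arrowProdEquivProdArrow ℝ ℝ (Fin N)
    (fun _ => gaussianReal 0 1) (fun _ => gaussianReal 0 1)).measureReal_preimage
      (hmeas hS).nullMeasurableSet
  have hset : MeasurableEquiv.arrowProdEquivProdArrow ℝ ℝ (Fin N) ⁻¹'
      ((fun xz : (Fin N → ℝ) × (Fin N → ℝ) =>
        (xz.1, η • xz.1 + Real.sqrt (1 - η ^ 2) • xz.2)) ⁻¹'
          {xy | sgnVec xy.1 = a ∧ sgnVec xy.2 = b})
      = Set.univ.pi fun i => signRegion (Real.arccos η) (a i) (b i) := by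
    ext f
    simp only [Set.mem_preimage, Set.mem_ofPred_eq, Set.mem_univ_pi, signRegion,
      Real.cos_arccos h0 h1, Real.sin_arccos, forall_and, funext_iff]
    rfl
  rw [Xi, map_measureReal_apply hmeas hS, stdGaussianPi, ← hpre, hset, Measure.real,
    Measure.pi_pi, ENNReal.toReal_prod, xiMass_eq_prod]
  refine Finset.prod_congr rfl fun i _ => ?_
  refine (gaussian_prod_real_signRegion (Real.arccos_nonneg η) (Real.arccos_le_pi η) _ _).trans ?_
  have := Real.pi_ne_zero
  split_ifs <;> field_simp <;> ring

theorem stmt10 :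
    ∀ N : ℕ, 1 ≤ N → ∀ η : ℝ, -1 ≤ η → η ≤ 1 →
      ∀ A B : Finset (Fin N → Bool),
        (Xi N η {xy : (Fin N → ℝ) × (Fin N → ℝ) |
            sgnVec xy.1 ∈ A ∧ sgnVec xy.2 ∈ B}).toReal
          = xiProb N (1 - (2 / Real.pi) * Real.arccos η) A B := by
  intro N _ η h0 h1 A B
  have hfin : IsFiniteMeasure (Xi N η) := by
    unfold Xi stdGaussianPi; infer_instance
  have hsgn : Measurable fun xy : (Fin N → ℝ) × (Fin N → ℝ) => (sgnVec xy.1, sgnVec xy.2) :=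
    (measurable_sgnVec.comp measurable_fst).prodMk (measurable_sgnVec.comp measurable_snd)
  have hset : {xy : (Fin N → ℝ) × (Fin N → ℝ) | sgnVec xy.1 ∈ A ∧ sgnVec xy.2 ∈ B}
      = (fun xy => (sgnVec xy.1, sgnVec xy.2)) ⁻¹' ↑(A ×ˢ B) := by
    ext; simp
  change (Xi N η).real _ = _
  rw [hset, ← sum_measureReal_preimage_singleton _ fun y _ => hsgn (measurableSet_singleton y),
    Finset.sum_product, xiProb]
  refine Finset.sum_congr rfl fun a _ => Finset.sum_congr rfl fun b _ => ?_
  rw [← Xi_real_sgnVec_eq N h0 h1]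
  congr 1
  ext; simp
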